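/- arXiv:2202.01913 — 2 statements merged into one kernel-verified Lean document; each statement's English description precedes it below -/
import Mathlib

section
/- Let H be a nonempty set, α ∈ [0,1), and ε ≥ 0. Let e, e_U, e_W : H → [0,1] be functions, and define e_S : H → ℝ by e_S(h) = (1−α)·e_U(h) + α·e_W(h). Suppose |e(h) − e_U(h)| ≤ ε/2 for every h ∈ H, and suppose ĥ ∈ H satisfies e_S(ĥ) ≤ e_S(h) for every h ∈ H. Then e(ĥ) ≤ inf_{h ∈ H} e(h) + ε + α/(1−α). -/
/-!
Since `eW` takes values in `[0, 1]`, changing the hypothesis moves the term `α * eW` by at most `α`.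
Hence a minimizer of `eS` minimizes `eU` up to `α / (1 - α)`, and passing between `eU` and `e` at the
two hypotheses compared costs `ε / 2` each. The bound holds against every `h`, hence against the
infimum.
-/

/-- Deterministic core of Theorem 3 (agnostic fallback guarantee of TCTbase):
if the sample error on the full set is `e_S = (1−α)·e_U + α·e_W`, the unbiased
sample errors `e_U` are uniformly `ε/2`-close to the true errors `e`, and `ĥ`
minimizes `e_S`, then `e(ĥ) ≤ inf_h e(h) + ε + α/(1−α)`. -/
theorem agnostic_erm_fallback {H : Type*} [Nonempty H]
    (α ε : ℝ) (hα0 : 0 ≤ α) (hα1 : α < 1) (hε : 0 ≤ ε)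
    (e eU eW : H → ℝ)
    (he : ∀ h, 0 ≤ e h ∧ e h ≤ 1)
    (heU : ∀ h, 0 ≤ eU h ∧ eU h ≤ 1)
    (heW : ∀ h, 0 ≤ eW h ∧ eW h ≤ 1)
    (eS : H → ℝ) (heS : ∀ h, eS h = (1 - α) * eU h + α * eW h)
    (hclose : ∀ h, |e h - eU h| ≤ ε / 2)
    (hhat : H) (hERM : ∀ h, eS hhat ≤ eS h) :
    e hhat ≤ (⨅ h, e h) + ε + α / (1 - α) := by
  have hpos : 0 < 1 - α := by linarith
  have key : e hhat - ε - α / (1 - α) ≤ ⨅ h, e h := by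
    refine le_ciInf fun h => ?_
    -- Optimality gives `(1 - α) (eU hhat - eU h) ≤ α (eW h - eW hhat) ≤ α`.
    have hU : eU hhat - eU h ≤ α / (1 - α) := by
      rw [le_div_iff₀ hpos]
      have h1 := hERM h
      rw [heS, heS] at h1
      have h2 : α * eW h ≤ α := mul_le_of_le_one_right hα0 (heW h).2
      have h3 : 0 ≤ α * eW hhat := mul_nonneg hα0 (heW hhat).1
      linarith
    have h4 := (abs_le.mp (hclose hhat)).2
    have h5 := (abs_le.mp (hclose h)).1
    linarith
  linarith
end

section
/- (Claim 2.) Let (Ω, 𝓕, P) be a probability space with a filtration (𝓕_i)_{i ∈ ℕ}, and let R ≥ 10 be an integer. For each integer i with ⌈2R/3⌉ ≤ i ≤ R, let B_i be an 𝓕_i-measurable random variable taking values in {0,1} with E[B_i | 𝓕_{i−1}] ≤ e^{−2^{3i/4}} almost surely. Then P( Σ_{i=⌈2R/3⌉}^{R} B_i ≥ R/6 ) ≤ e^{−2^{R/2}}. -/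
/-!
Markov's inequality already gives the bound; no martingale concentration is needed.
Write `q = exp (-2 ^ (R / 2))` and `a = ⌈2R/3⌉`. Integrating the conditional bound gives
`E[B_i] ≤ exp (-2 ^ (3i/4))`. For `i = a` this is at most `q`, because `3a/4 ≥ R/2`. For `i > a` the
inner exponent gains at least `3/4`, and since `2 ^ (R/2) ≥ 32` the bound drops to at most `q / 10`
(`later_bound`). There are at most `R/3` such later rounds, so
`P(∑ B_i ≥ R/6) ≤ (6/R) (q + (R/3) (q/10)) = (6/R + 1/5) q ≤ q`, using `R ≥ 10`.
-/

open MeasureTheory Finset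

/-- The bound on `E[B_i]` in any round after the first is smaller than the target bound by a
factor of at least `10`; this is what beats the number of rounds in Markov's inequality. -/
lemma later_bound (R i : ℕ) (hR : 10 ≤ R) (hi : 2 * (R : ℝ) / 3 + 1 ≤ i) :
    Real.exp (-(2 : ℝ) ^ ((3 * (i : ℝ)) / 4)) ≤ Real.exp (-(2 : ℝ) ^ ((R : ℝ) / 2)) / 10 := by
  have hR' : (10 : ℝ) ≤ R := by exact_mod_cast hR
  have h32 : (32 : ℝ) ≤ (2 : ℝ) ^ ((R : ℝ) / 2) := by
    calc (32 : ℝ) = (2 : ℝ) ^ (5 : ℝ) := by norm_num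
      _ ≤ _ := Real.rpow_le_rpow_of_exponent_le (by norm_num) (by linarith)
  have hsqrt : (1.4 : ℝ) ≤ (2 : ℝ) ^ ((1 : ℝ) / 2) := by
    rw [← Real.sqrt_eq_rpow]
    exact Real.le_sqrt_of_sq_le (by norm_num)
  have hgrow : (2 : ℝ) ^ ((R : ℝ) / 2) * 1.4 ≤ (2 : ℝ) ^ ((3 * (i : ℝ)) / 4) := by
    calc (2 : ℝ) ^ ((R : ℝ) / 2) * 1.4
        ≤ (2 : ℝ) ^ ((R : ℝ) / 2) * (2 : ℝ) ^ ((1 : ℝ) / 2) := by gcongr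
      _ = (2 : ℝ) ^ ((R : ℝ) / 2 + 1 / 2) := (Real.rpow_add (by norm_num) _ _).symm
      _ ≤ _ := Real.rpow_le_rpow_of_exponent_le (by norm_num) (by linarith)
  have hexp : (10 : ℝ) ≤ Real.exp 12 := by linarith [Real.add_one_le_exp (12 : ℝ)]
  rw [le_div_iff₀ (by norm_num)]
  calc Real.exp (-(2 : ℝ) ^ ((3 * (i : ℝ)) / 4)) * 10
      ≤ Real.exp (-(2 : ℝ) ^ ((3 * (i : ℝ)) / 4)) * Real.exp 12 := by gcongr
    _ = Real.exp (-(2 : ℝ) ^ ((3 * (i : ℝ)) / 4) + 12) := (Real.exp_add _ _).symm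
    _ ≤ _ := Real.exp_le_exp.mpr (by linarith)

/-- Claim 2 of the paper: if `B_i` (for `⌈2R/3⌉ ≤ i ≤ R`, `R ≥ 10`) are `{0,1}`-valued,
adapted, with `E[B_i | 𝓕_{i−1}] ≤ e^{−2^{3i/4}}` a.s., then
`P(∑_{i=⌈2R/3⌉}^{R} B_i ≥ R/6) ≤ e^{−2^{R/2}}`. -/
theorem claim2_bad_rounds
    {Ω : Type*} {m0 : MeasurableSpace Ω} (P : Measure Ω) [IsProbabilityMeasure P]
    (ℱ : Filtration ℕ m0) (R : ℕ) (hR : 10 ≤ R) (B : ℕ → Ω → ℝ)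
    (hadapted : ∀ i ∈ Finset.Icc ⌈(2 * (R : ℝ)) / 3⌉₊ R, StronglyMeasurable[ℱ i] (B i))
    (h01 : ∀ i ∈ Finset.Icc ⌈(2 * (R : ℝ)) / 3⌉₊ R, ∀ ω, B i ω = 0 ∨ B i ω = 1)
    (hcond : ∀ i ∈ Finset.Icc ⌈(2 * (R : ℝ)) / 3⌉₊ R,
      ∀ᵐ ω ∂P, (P[B i | ℱ (i - 1)]) ω ≤ Real.exp (-(2 : ℝ) ^ ((3 * (i : ℝ)) / 4))) :
    P {ω | (R : ℝ) / 6 ≤ ∑ i ∈ Finset.Icc ⌈(2 * (R : ℝ)) / 3⌉₊ R, B i ω}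
      ≤ ENNReal.ofReal (Real.exp (-(2 : ℝ) ^ ((R : ℝ) / 2))) := by
  set a : ℕ := ⌈(2 * (R : ℝ)) / 3⌉₊ with ha
  set q : ℝ := Real.exp (-(2 : ℝ) ^ ((R : ℝ) / 2)) with hq
  have hq0 : 0 < q := Real.exp_pos _
  have hR' : (10 : ℝ) ≤ R := by exact_mod_cast hR
  have haR : 2 * (R : ℝ) / 3 ≤ a := Nat.le_ceil _
  have haR' : a ≤ R := Nat.ceil_le.mpr (by linarith)
  have hint : ∀ i ∈ Icc a R, Integrable (B i) P := fun i hi =>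
    Integrable.of_bound ((hadapted i hi).mono (ℱ.le i)).aestronglyMeasurable 1
      (Filter.Eventually.of_forall fun ω => by rcases h01 i hi ω with h | h <;> simp [h])
  have hmean : ∀ i ∈ Icc a R, ∫ ω, B i ω ∂P ≤ Real.exp (-(2 : ℝ) ^ ((3 * (i : ℝ)) / 4)) := by
    intro i hi
    rw [← integral_condExp (ℱ.le (i - 1))]
    calc ∫ ω, (P[B i | ℱ (i - 1)]) ω ∂P
        ≤ ∫ _, Real.exp (-(2 : ℝ) ^ ((3 * (i : ℝ)) / 4)) ∂P :=
          integral_mono_ae integrable_condExp (integrable_const _) (hcond i hi)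
      _ = _ := by simp
  have hfirst : ∫ ω, B a ω ∂P ≤ q := by
    refine (hmean a (left_mem_Icc.mpr haR')).trans (Real.exp_le_exp.mpr (neg_le_neg ?_))
    exact Real.rpow_le_rpow_of_exponent_le (by norm_num) (by linarith)
  have hlater : ∑ i ∈ Ioc a R, ∫ ω, B i ω ∂P ≤ (R / 3 : ℝ) * (q / 10) := by
    calc ∑ i ∈ Ioc a R, ∫ ω, B i ω ∂P ≤ ∑ i ∈ Ioc a R, q / 10 := by
          refine sum_le_sum fun i hi => (hmean i (Ioc_subset_Icc_self hi)).trans ?_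
          have hai : (a : ℝ) + 1 ≤ i := by exact_mod_cast (mem_Ioc.mp hi).1
          exact later_bound R i hR (by linarith)
      _ = ((R : ℝ) - a) * (q / 10) := by
          rw [sum_const, Nat.card_Ioc, nsmul_eq_mul, Nat.cast_sub haR']
      _ ≤ _ := by
          gcongr
          linarith
  have htotal : ∫ ω, ∑ i ∈ Icc a R, B i ω ∂P ≤ q + (R / 3 : ℝ) * (q / 10) := by
    rw [integral_finsetSum _ hint, ← add_sum_Ioc_eq_sum_Icc haR']
    exact add_le_add hfirst hlater
  have hmarkov := mul_meas_ge_le_integral_of_nonneg (μ := P)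
    (f := fun ω => ∑ i ∈ Icc a R, B i ω)
    (Filter.Eventually.of_forall fun ω => sum_nonneg fun i hi => by
      rcases h01 i hi ω with h | h <;> simp [h])
    (integrable_finsetSum _ hint) ((R : ℝ) / 6)
  rw [← ENNReal.ofReal_toReal (measure_ne_top P _)]
  refine ENNReal.ofReal_le_ofReal ?_
  change P.real _ ≤ q
  refine le_of_mul_le_mul_left (a := (R : ℝ) / 6) ?_ (by positivity)
  refine hmarkov.trans (htotal.trans ?_)
  nlinarith
end
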